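/- arXiv:1111.6156 — 3 statements merged into one kernel-verified Lean document; each statement's English description precedes it below -/
import Mathlib

section
/- Let F = (R, Σ) be a subset-free congestion game form that is tree representable (i.e., F has no bad configuration). Then every monotone symmetric congestion game G ∈ 𝒢(F) satisfies Z(G) = NE(G). -/
/-!
A strategy profile is seen as being built one player at a time. Write `x` and `y` for the
strategies of two players `i` and `j`, and fix the load `d` caused by everybody else.

* Greedy profiles are equilibria: if `j` best-responds to `d`, and `i` best-responds to `d` plus
  `y`, then `j` still best-responds to `d` plus `x` (`bestResponse_add`). A deviation `t` of `j`
  could only become attractive if `x ∩ y ⊄ t`. The absence of bad configurations then gives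
  `x ∩ t = y ∩ t`, so that `t` yields `j` what it yields `i`, for whom it is not profitable, while
  `j` is at least as well off as `i`.
* Equilibria are greedy: remove a player `i` of minimal utility. Everybody else still
  best-responds (`bestResponse_remove`): a deviation `t` of `j` could only become attractive if
  `t ∩ x ⊄ y`, and then `x ∩ y = t ∩ y`, so that a profit for `j` would yield one for `i`, as `i`
  is at most as well off as `j`. Making `i` the last player of the order, the claim follows by
  induction on the number of players.

In both cases the comparison of the payoff sums is checked resource by resource.
-/

open Finset

/-- Congestion of resource `r` under strategy profile `s` (players `ι`). -/
def cgCong {ρ ι : Type} [DecidableEq ρ] [Fintype ι] (s : ι → Finset ρ) (r : ρ) : ℕ :=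
  (Finset.univ.filter (fun i => r ∈ s i)).card

/-- Utility of player `i`: the sum of `P r (c(s)_r)` over the resources she uses. -/
def cgUtil {ρ ι : Type} [DecidableEq ρ] [Fintype ι] (P : ρ → ℕ → ℝ)
    (s : ι → Finset ρ) (i : ι) : ℝ :=
  ∑ r ∈ s i, P r (cgCong s r)

/-- A strategy profile: every player selects a strategy from the strategy set `SS`. -/
def IsProfile {ρ ι : Type} (SS : Finset (Finset ρ)) (s : ι → Finset ρ) : Prop :=
  ∀ i, s i ∈ SS

/-- Pure Nash equilibrium. -/
def IsNE {ρ ι : Type} [DecidableEq ρ] [DecidableEq ι] [Fintype ι]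
    (SS : Finset (Finset ρ)) (P : ρ → ℕ → ℝ) (s : ι → Finset ρ) : Prop :=
  IsProfile SS s ∧
    ∀ i : ι, ∀ t ∈ SS, cgUtil P s i ≥ cgUtil P (Function.update s i t) i

/-- The congestion seen by player `i` on resource `r` from players preceding her
in the order `π`. -/
def greedyCong {ρ ι : Type} [DecidableEq ρ] [Fintype ι] (s : ι → Finset ρ)
    (π : ι → ℕ) (i : ι) (r : ρ) : ℕ :=
  (Finset.univ.filter (fun j => r ∈ s j ∧ π j < π i)).card

/-- Greedy profile: for some linear order (injective ranking `π`) of the players,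
each player's strategy is a best response to the choices of her predecessors. -/
def IsGreedy {ρ ι : Type} [DecidableEq ρ] [Fintype ι]
    (SS : Finset (Finset ρ)) (P : ρ → ℕ → ℝ) (s : ι → Finset ρ) : Prop :=
  IsProfile SS s ∧
    ∃ π : ι → ℕ, Function.Injective π ∧ ∀ i : ι, ∀ t ∈ SS,
      (∑ r ∈ s i, P r (greedyCong s π i r + 1)) ≥
        ∑ r ∈ t, P r (greedyCong s π i r + 1)

/-- Monotone resource payoffs (for a game with `n` players):
`P_r(k) > P_r(l)` whenever `1 ≤ k < l ≤ n`. -/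
def MonotonePay {ρ : Type} (n : ℕ) (P : ρ → ℕ → ℝ) : Prop :=
  ∀ r : ρ, ∀ k l : ℕ, 1 ≤ k → k < l → l ≤ n → P r k > P r l

/-- A congestion game form: nonempty strategy set consisting of nonempty resource sets. -/
def ValidForm {ρ : Type} (SS : Finset (Finset ρ)) : Prop :=
  SS.Nonempty ∧ ∀ s ∈ SS, s.Nonempty

/-- Subset-free strategy set. -/
def SubsetFree {ρ : Type} (SS : Finset (Finset ρ)) : Prop :=
  ∀ s ∈ SS, ∀ t ∈ SS, s ≠ t → ¬ s ⊆ t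

/-- A bad configuration (Holzman–Law Yone): a form is tree representable iff
it has no bad configuration. -/
def BadConfig {ρ : Type} (SS : Finset (Finset ρ)) : Prop :=
  ∃ A B : ρ, ∃ s1 ∈ SS, ∃ s2 ∈ SS, ∃ s3 ∈ SS,
    A ∈ s1 ∧ B ∈ s1 ∧ A ∈ s2 ∧ A ∉ s3 ∧ B ∈ s3 ∧ B ∉ s2

/-! ### Best responses and loads -/

/-- Strategy `x` is a best response when the other players cause the load `d`. -/
def BestResponse {ρ : Type} (SS : Finset (Finset ρ)) (P : ρ → ℕ → ℝ) (d : ρ → ℕ)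
    (x : Finset ρ) : Prop :=
  ∀ t ∈ SS, ∑ r ∈ t, P r (d r + 1) ≤ ∑ r ∈ x, P r (d r + 1)

/-- The load that the players in `T` cause on the resource `r`. -/
def load {ρ ι : Type} [DecidableEq ρ] (s : ι → Finset ρ) (T : Finset ι) (r : ρ) : ℕ :=
  (T.filter (fun j => r ∈ s j)).card

/-- The profile `s`, restricted to the players in `T`, is an equilibrium of the game played by `T`
alone. -/
def EqOn {ρ ι : Type} [DecidableEq ρ] [DecidableEq ι] (SS : Finset (Finset ρ)) (P : ρ → ℕ → ℝ)
    (s : ι → Finset ρ) (T : Finset ι) : Prop :=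
  ∀ j ∈ T, BestResponse SS P (load s (T.erase j)) (s j)

/-- The load `d` increased by one user of strategy `x`. -/
def addUser {ρ : Type} [DecidableEq ρ] (d : ρ → ℕ) (x : Finset ρ) (r : ρ) : ℕ :=
  d r + if r ∈ x then 1 else 0

lemma load_insert {ρ ι : Type} [DecidableEq ρ] [DecidableEq ι] (s : ι → Finset ρ) {T : Finset ι}
    {i : ι} (hi : i ∉ T) :
    load s (insert i T) = addUser (load s T) (s i) := by
  funext r
  unfold load addUser
  rw [Finset.filter_insert]
  split_ifs <;> simp [hi]

lemma load_le {ρ ι : Type} [DecidableEq ρ] (s : ι → Finset ρ) (T : Finset ι) (r : ρ) :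
    load s T r ≤ T.card :=
  Finset.card_filter_le _ _

/-- Payoffs weakly decrease when the load leaves room for two more players. -/
lemma pay_anti {ρ ι : Type} [DecidableEq ρ] {n : ℕ} {P : ρ → ℕ → ℝ} (hP : MonotonePay n P)
    (s : ι → Finset ρ) {T : Finset ι} (hT : T.card + 2 ≤ n) (r : ρ) :
    P r (load s T r + 1 + 1) ≤ P r (load s T r + 1) :=
  (hP r _ _ (by omega) (by omega) (by have := load_le s T r; omega)).le

/-! ### One player entering or leaving -/

section

variable {ρ : Type} [DecidableEq ρ] [Fintype ρ]

lemma sum_eq_indicator (t : Finset ρ) (f : ρ → ℝ) :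
    ∑ r ∈ t, f r = ∑ r, if r ∈ t then f r else 0 := by
  simp

/-- A best response `y` stays one when a further player enters with a best response `x`. -/
lemma bestResponse_add {SS : Finset (Finset ρ)} (htr : ¬ BadConfig SS) {P : ρ → ℕ → ℝ}
    {d : ρ → ℕ} (hP : ∀ r, P r (d r + 1 + 1) ≤ P r (d r + 1)) {x y : Finset ρ} (hx : x ∈ SS)
    (hy : y ∈ SS) (h1 : BestResponse SS P d y) (h2 : BestResponse SS P (addUser d y) x) :
    BestResponse SS P (addUser d x) y := by
  intro t ht
  have h1t := h1 t ht
  have h1x := h1 x hx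
  have h2t := h2 t ht
  by_cases hc : ∃ A, A ∈ x ∧ A ∈ y ∧ A ∉ t
  · obtain ⟨A, hAx, hAy, hAt⟩ := hc
    -- the absence of bad configurations gives `x ∩ t = y ∩ t`
    have e1 : ∀ r, r ∈ x → r ∈ t → r ∈ y := fun r hrx hrt => by
      by_contra hry
      exact htr ⟨A, r, x, hx, y, hy, t, ht, hAx, hrx, hAy, hAt, hrt, hry⟩
    have e2 : ∀ r, r ∈ y → r ∈ t → r ∈ x := fun r hry hrt => by
      by_contra hrx
      exact htr ⟨A, r, y, hy, x, hx, t, ht, hAy, hry, hAx, hAt, hrt, hrx⟩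
    have key : ∑ r ∈ t, P r (addUser d x r + 1) + ∑ r ∈ y, P r (d r + 1)
        + ∑ r ∈ x, P r (addUser d y r + 1) ≤ ∑ r ∈ y, P r (addUser d x r + 1)
        + ∑ r ∈ x, P r (d r + 1) + ∑ r ∈ t, P r (addUser d y r + 1) := by
      simp only [sum_eq_indicator t, sum_eq_indicator x, sum_eq_indicator y,
        ← Finset.sum_add_distrib]
      refine Finset.sum_le_sum fun r _ => ?_
      have := hP r
      have := e1 r
      have := e2 r
      by_cases r ∈ x <;> by_cases r ∈ y <;> by_cases r ∈ t <;> simp_all [addUser] <;> linarith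
    linarith
  · push Not at hc
    have key : ∑ r ∈ t, P r (addUser d x r + 1) + ∑ r ∈ y, P r (d r + 1)
        ≤ ∑ r ∈ y, P r (addUser d x r + 1) + ∑ r ∈ t, P r (d r + 1) := by
      simp only [sum_eq_indicator t, sum_eq_indicator y,
        ← Finset.sum_add_distrib]
      refine Finset.sum_le_sum fun r _ => ?_
      have := hP r
      have := hc r
      by_cases r ∈ x <;> by_cases r ∈ y <;> by_cases r ∈ t <;> simp_all [addUser]
    linarith

/-- A best response `y` stays one when a best-responding player, with strategy `x` and a utility
not larger than that of `y`, leaves. -/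
lemma bestResponse_remove {SS : Finset (Finset ρ)} (htr : ¬ BadConfig SS) {P : ρ → ℕ → ℝ}
    {d : ρ → ℕ} (hP : ∀ r, P r (d r + 1 + 1) ≤ P r (d r + 1)) {x y : Finset ρ} (hx : x ∈ SS)
    (hy : y ∈ SS) (h1 : BestResponse SS P (addUser d x) y)
    (h2 : BestResponse SS P (addUser d y) x)
    (hle : ∑ r ∈ x, P r (addUser d y r + 1) ≤ ∑ r ∈ y, P r (addUser d x r + 1)) :
    BestResponse SS P d y := by
  intro t ht
  have h1t := h1 t ht
  have h2t := h2 t ht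
  by_cases hc : ∃ B, B ∈ t ∧ B ∈ x ∧ B ∉ y
  · obtain ⟨B, hBt, hBx, hBy⟩ := hc
    -- the absence of bad configurations gives `x ∩ y = t ∩ y`
    have e1 : ∀ r, r ∈ x → r ∈ y → r ∈ t := fun r hrx hry => by
      by_contra hrt
      exact htr ⟨r, B, x, hx, y, hy, t, ht, hrx, hBx, hry, hrt, hBt, hBy⟩
    have e2 : ∀ r, r ∈ t → r ∈ y → r ∈ x := fun r hrt hry => by
      by_contra hrx
      exact htr ⟨r, B, t, ht, y, hy, x, hx, hrt, hBt, hry, hrx, hBx, hBy⟩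
    have key : ∑ r ∈ t, P r (d r + 1) + ∑ r ∈ y, P r (addUser d x r + 1)
        ≤ ∑ r ∈ y, P r (d r + 1) + ∑ r ∈ t, P r (addUser d y r + 1) := by
      simp only [sum_eq_indicator t, sum_eq_indicator y,
        ← Finset.sum_add_distrib]
      refine Finset.sum_le_sum fun r _ => ?_
      have := hP r
      have := e1 r
      have := e2 r
      by_cases r ∈ x <;> by_cases r ∈ y <;> by_cases r ∈ t <;> simp_all [addUser]
    linarith
  · push Not at hc
    have key : ∑ r ∈ t, P r (d r + 1) + ∑ r ∈ y, P r (addUser d x r + 1)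
        ≤ ∑ r ∈ y, P r (d r + 1) + ∑ r ∈ t, P r (addUser d x r + 1) := by
      simp only [sum_eq_indicator t, sum_eq_indicator y,
        ← Finset.sum_add_distrib]
      refine Finset.sum_le_sum fun r _ => ?_
      have := hP r
      have := hc r
      by_cases r ∈ x <;> by_cases r ∈ y <;> by_cases r ∈ t <;> simp_all [addUser]
    linarith

variable {ι : Type} [DecidableEq ι]

/-! ### Equilibria of groups of players -/

/-- A best-responding newcomer preserves the equilibrium property. -/
lemma eqOn_insert {SS : Finset (Finset ρ)} (htr : ¬ BadConfig SS) {n : ℕ} {P : ρ → ℕ → ℝ}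
    (hP : MonotonePay n P) {s : ι → Finset ρ} (hs : IsProfile SS s) {T : Finset ι} {i : ι}
    (hi : i ∉ T) (hT : T.card + 1 ≤ n) (h : EqOn SS P s T)
    (hbr : BestResponse SS P (load s T) (s i)) : EqOn SS P s (insert i T) := by
  intro j hj
  rcases Finset.mem_insert.1 hj with rfl | hj
  · rwa [Finset.erase_insert hi]
  · have hij : i ≠ j := fun e => hi (e ▸ hj)
    rw [Finset.erase_insert_of_ne hij, load_insert s (fun h => hi (Finset.mem_of_mem_erase h))]
    refine bestResponse_add htr (pay_anti hP s ?_) (hs i) (hs j) (h j hj) ?_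
    · have := Finset.card_erase_add_one hj
      omega
    · rwa [← load_insert s (Finset.notMem_erase j T), Finset.insert_erase hj]

/-- The players of an equilibrium can be ordered so that each best-responds to her
predecessors. -/
lemma exists_order {SS : Finset (Finset ρ)} (htr : ¬ BadConfig SS) {n : ℕ} {P : ρ → ℕ → ℝ}
    (hP : MonotonePay n P) {s : ι → Finset ρ} (hs : IsProfile SS s) (m : ℕ) :
    ∀ T : Finset ι, T.card = m → m ≤ n → EqOn SS P s T →
      ∃ π : ι → ℕ, (∀ i ∈ T, π i < m) ∧ Set.InjOn π T ∧
        ∀ i ∈ T, BestResponse SS P (load s (T.filter fun j => π j < π i)) (s i) := by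
  induction m with
  | zero =>
    intro T hT _ _
    rw [Finset.card_eq_zero] at hT
    subst hT
    exact ⟨fun _ => 0, by simp⟩
  | succ m ih =>
    intro T hT hn h
    -- the last player is one of minimal utility
    obtain ⟨i, hi, hmin⟩ := T.exists_min_image
      (fun i => ∑ r ∈ s i, P r (load s (T.erase i) r + 1)) (Finset.card_pos.1 (by omega))
    have hcard : (T.erase i).card = m := by
      rw [Finset.card_erase_of_mem hi, hT]; omega
    have hE : EqOn SS P s (T.erase i) := by
      intro j hj
      obtain ⟨hji, hjT⟩ := Finset.mem_erase.1 hj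
      have ej : load s (T.erase j) = addUser (load s ((T.erase i).erase j)) (s i) := by
        rw [← load_insert s (by simp), Finset.erase_right_comm, Finset.insert_erase]
        exact Finset.mem_erase.2 ⟨hji.symm, hi⟩
      have ei : load s (T.erase i) = addUser (load s ((T.erase i).erase j)) (s j) := by
        rw [← load_insert s (by simp), Finset.insert_erase hj]
      have h1 := h j hjT
      have h2 := h i hi
      have h3 := hmin j hjT
      simp only [ej, ei] at h1 h2 h3
      refine bestResponse_remove htr (pay_anti hP s ?_) (hs i) (hs j) h1 h2 h3
      have := Finset.card_erase_add_one hj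
      omega
    obtain ⟨π, hlt, hinj, hbr⟩ := ih _ hcard (by omega) hE
    have hne : ∀ j ∈ T, j ≠ i → Function.update π i m j = π j ∧ π j < m := fun j hj hji =>
      ⟨Function.update_of_ne hji _ _, hlt j (Finset.mem_erase.2 ⟨hji, hj⟩)⟩
    refine ⟨Function.update π i m, ?_, ?_, ?_⟩
    · intro j hj
      by_cases hji : j = i
      · subst hji; simp
      · have := hne j hj hji
        omega
    · intro j hj k hk hjk
      rw [Finset.mem_coe] at hj hk
      by_cases hji : j = i <;> by_cases hki : k = i
      · rw [hji, hki]
      · subst hji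
        have := hne k hk hki
        rw [Function.update_self] at hjk
        omega
      · subst hki
        have := hne j hj hji
        rw [Function.update_self] at hjk
        omega
      · rw [(hne j hj hji).1, (hne k hk hki).1] at hjk
        exact hinj (by simp [hj, hji]) (by simp [hk, hki]) hjk
    · intro j hj
      by_cases hji : j = i
      · subst hji
        have : (T.filter fun k => Function.update π j m k < Function.update π j m j)
            = T.erase j := by
          ext k
          rw [Finset.mem_filter, Finset.mem_erase, Function.update_self]
          constructor
          · rintro ⟨hk, hlt'⟩
            refine ⟨?_, hk⟩
            rintro rfl
            simp at hlt'
          · rintro ⟨hkj, hk⟩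
            have := hne k hk hkj
            exact ⟨hk, by omega⟩
        rw [this]
        exact h j hj
      · have : (T.filter fun k => Function.update π i m k < Function.update π i m j)
            = (T.erase i).filter fun k => π k < π j := by
          ext k
          rw [Finset.mem_filter, Finset.mem_filter, Finset.mem_erase, (hne j hj hji).1]
          have hjm := (hne j hj hji).2
          by_cases hki : k = i
          · subst hki
            simp
            omega
          · simp [hki]
        rw [this]
        exact hbr j (Finset.mem_erase.2 ⟨hji, hj⟩)

/-! ### Nash equilibria and greedy profiles -/

variable [Fintype ι]

lemma cgUtil_update (P : ρ → ℕ → ℝ) (s : ι → Finset ρ) (i : ι) (t : Finset ρ) :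
    cgUtil P (Function.update s i t) i
      = ∑ r ∈ t, P r (load s (Finset.univ.erase i) r + 1) := by
  unfold cgUtil
  rw [Function.update_self]
  refine Finset.sum_congr rfl fun r hr => ?_
  congr 1
  have : (Finset.univ.filter fun j => r ∈ Function.update s i t j)
      = insert i ((Finset.univ.erase i).filter fun j => r ∈ s j) := by
    ext j
    by_cases hji : j = i
    · subst hji
      simp [hr]
    · simp [hji]
  unfold cgCong load
  rw [this, Finset.card_insert_of_notMem (by simp)]

lemma isNE_iff (SS : Finset (Finset ρ)) (P : ρ → ℕ → ℝ) (s : ι → Finset ρ) :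
    IsNE SS P s ↔ IsProfile SS s ∧ EqOn SS P s Finset.univ := by
  have h : ∀ i, cgUtil P s i = ∑ r ∈ s i, P r (load s (Finset.univ.erase i) r + 1) := fun i => by
    rw [← cgUtil_update, Function.update_eq_self]
  simp only [IsNE, EqOn, BestResponse, cgUtil_update, h, ge_iff_le, Finset.mem_univ,
    forall_true_left]

lemma greedyCong_eq_load (s : ι → Finset ρ) (π : ι → ℕ) (i : ι) (r : ρ) :
    greedyCong s π i r = load s (Finset.univ.filter fun j => π j < π i) r := by
  unfold greedyCong load
  rw [Finset.filter_filter]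
  simp only [and_comm]

lemma isGreedy_iff (SS : Finset (Finset ρ)) (P : ρ → ℕ → ℝ) (s : ι → Finset ρ) :
    IsGreedy SS P s ↔ IsProfile SS s ∧ ∃ π : ι → ℕ, Function.Injective π ∧
      ∀ i, BestResponse SS P (load s (Finset.univ.filter fun j => π j < π i)) (s i) := by
  simp only [IsGreedy, BestResponse, greedyCong_eq_load, ge_iff_le]

/-- In a greedy profile, every initial segment of the players is in equilibrium. -/
lemma eqOn_segment {SS : Finset (Finset ρ)} (htr : ¬ BadConfig SS) {P : ρ → ℕ → ℝ}
    (hP : MonotonePay (Fintype.card ι) P) {s : ι → Finset ρ} (hs : IsProfile SS s) {π : ι → ℕ}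
    (hinj : Function.Injective π)
    (h : ∀ i, BestResponse SS P (load s (Finset.univ.filter fun j => π j < π i)) (s i)) (k : ℕ) :
    EqOn SS P s (Finset.univ.filter fun j => π j < k) := by
  induction k with
  | zero => intro j hj; simp at hj
  | succ k ih =>
    by_cases hk : ∃ i, π i = k
    · obtain ⟨i, rfl⟩ := hk
      have e : (Finset.univ.filter fun j => π j < π i + 1)
          = insert i (Finset.univ.filter fun j => π j < π i) := by
        ext j
        simp only [Finset.mem_filter, Finset.mem_univ, true_and, Finset.mem_insert,
          Nat.lt_succ_iff_lt_or_eq, hinj.eq_iff]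
        tauto
      rw [e]
      have hi : i ∉ Finset.univ.filter fun j => π j < π i := by simp
      refine eqOn_insert htr hP hs hi ?_ ih (h i)
      rw [← Finset.card_insert_of_notMem hi]
      exact Finset.card_le_univ _
    · push Not at hk
      have e : (Finset.univ.filter fun j => π j < k + 1)
          = Finset.univ.filter fun j => π j < k := by
        ext j
        have := hk j
        simp only [Finset.mem_filter, Finset.mem_univ, true_and]
        omega
      rwa [e]

end

/-- If a subset-free congestion game form is tree representable (no bad
configuration), then every monotone symmetric congestion game with this form
satisfies `Z(G) = NE(G)`. -/
theorem greedy_eq_NE_of_tree_representable {ρ : Type} [DecidableEq ρ] [Fintype ρ]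
    (SS : Finset (Finset ρ)) (hform : ValidForm SS) (hsf : SubsetFree SS)
    (htr : ¬ BadConfig SS) :
    ∀ n : ℕ, 1 ≤ n → ∀ P : ρ → ℕ → ℝ, MonotonePay n P →
      ∀ s : Fin n → Finset ρ, (IsGreedy SS P s ↔ IsNE SS P s) := by
  intro n _ P hP s
  rw [isGreedy_iff, isNE_iff]
  refine and_congr_right fun hs => ⟨?_, fun h => ?_⟩
  · rintro ⟨π, hinj, h⟩
    have := eqOn_segment htr (by rwa [Fintype.card_fin]) hs hinj h (Finset.univ.sup π + 1)
    rwa [Finset.filter_true_of_mem] at this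
    exact fun j _ => Nat.lt_succ_of_le (Finset.le_sup (Finset.mem_univ j))
  · obtain ⟨π, -, hinj, hbr⟩ := exists_order htr hP hs n _ (Finset.card_fin n) le_rfl h
    exact ⟨π, fun i j hij => hinj (by simp) (by simp) hij, fun i => hbr i (Finset.mem_univ i)⟩
end

section
/- Let G be a monotone symmetric congestion game with n players whose game form is subset-free and has no bad configuration. Consider any sequence of strategy profiles s_0, s_1, …, s_m such that for each k < m, s_{k+1} is obtained from s_k by a single player i switching to a best response (a strategy t ∈ Σ maximizing U^i(t, s_k^{-i}) over Σ) which strictly increases her utility: U^i(s_{k+1}) > U^i(s_k). Then m ≤ n; in particular, every maximal such sequence ends after at most n steps in a pure Nash equilibrium. -/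
/-!
The key fact is that a best-response step of one player never destroys the best-response property
of another player (`IsBR.step`). Consequently a player who has moved keeps playing a best response,
cannot strictly improve again, and so moves at most once; this bounds the length by the number of
players.

For the key fact, fix players `i ≠ j` and the choices of all the others. Let `a r` be the payoff of
`r` when only one of `i`, `j` uses it and `d r > 0` the loss incurred when both do. Playing `x`
against `y` then yields `a(x) - d(x ∩ y)`. Without a bad configuration, `x ∩ z ⊆ y` or
`y ∩ z ⊆ x` for all strategies `x, y, z`, so `D(x, y) = d(x ∩ y)` satisfies the ultrametric
inequality `min (D(x, z)) (D(y, z)) ≤ D(x, y)`, and hence the four-point inequality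
`min (D(t, q) + D(p, q')) (D(p, t) + D(q, q')) ≤ D(t, q') + D(p, q)`.
If `p` is best against `q`, `q'` is best against `p`, but `t` beats `p` against `q'`, then adding up
the corresponding inequalities shows that both terms of the minimum exceed the right-hand side, a
contradiction. If no step is available, a player who is not best responding could move to a
maximiser over the finite strategy set, so the profile is an equilibrium.
-/

open Finset

/-- A strictly improving best-response step: a single player `i` switches to a
best response to the others' strategies and strictly increases her utility. -/
def BRStep {ρ ι : Type} [DecidableEq ρ] [DecidableEq ι] [Fintype ι]
    (SS : Finset (Finset ρ)) (P : ρ → ℕ → ℝ) (s s' : ι → Finset ρ) : Prop :=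
  ∃ i : ι, s' i ∈ SS ∧ (∀ j : ι, j ≠ i → s' j = s j) ∧
    (∀ t ∈ SS, cgUtil P s' i ≥ cgUtil P (Function.update s i t) i) ∧
    cgUtil P s' i > cgUtil P s i

/-- Player `i` plays a best response in `s`. -/
def IsBR {ρ ι : Type} [DecidableEq ρ] [DecidableEq ι] [Fintype ι]
    (SS : Finset (Finset ρ)) (P : ρ → ℕ → ℝ) (s : ι → Finset ρ) (i : ι) : Prop :=
  ∀ t ∈ SS, cgUtil P (Function.update s i t) i ≤ cgUtil P s i

theorem inter_subset_or {ρ : Type} [DecidableEq ρ] {SS : Finset (Finset ρ)}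
    (htr : ¬ BadConfig SS) {x y z : Finset ρ} (hx : x ∈ SS) (hy : y ∈ SS) (hz : z ∈ SS) :
    x ∩ z ⊆ y ∨ y ∩ z ⊆ x := by
  by_contra! h
  obtain ⟨h1, h2⟩ := h
  obtain ⟨A, hA, hA'⟩ := Finset.not_subset.1 h1
  obtain ⟨B, hB, hB'⟩ := Finset.not_subset.1 h2
  rw [Finset.mem_inter] at hA hB
  exact htr ⟨A, B, z, hz, x, hx, y, hy, hA.2, hB.2, hA.1, hA', hB.1, hB'⟩

/-- The weight of the intersection of two strategies satisfies the ultrametric inequality. -/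
theorem ultra {ρ : Type} [DecidableEq ρ] {SS : Finset (Finset ρ)}
    (htr : ¬ BadConfig SS) {d : ρ → ℝ} (hd : ∀ r, 0 ≤ d r)
    {x y z : Finset ρ} (hx : x ∈ SS) (hy : y ∈ SS) (hz : z ∈ SS) :
    ∑ r ∈ x ∩ z, d r ≤ ∑ r ∈ x ∩ y, d r ∨ ∑ r ∈ y ∩ z, d r ≤ ∑ r ∈ x ∩ y, d r := by
  rcases inter_subset_or htr hx hy hz with h | h
  · exact Or.inl (Finset.sum_le_sum_of_subset_of_nonneg
      (Finset.subset_inter Finset.inter_subset_left h) fun r _ _ => hd r)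
  · exact Or.inr (Finset.sum_le_sum_of_subset_of_nonneg
      (Finset.subset_inter h Finset.inter_subset_left) fun r _ _ => hd r)

/-- Two-player core: if `p` is best against `q` and `q'` is best against `p`, then `p` is best
against `q'`. -/
theorem two_player {ρ : Type} [DecidableEq ρ] {SS : Finset (Finset ρ)}
    (htr : ¬ BadConfig SS) {a d : ρ → ℝ} (hd : ∀ r, 0 ≤ d r)
    {p q q' : Finset ρ} (hp : p ∈ SS) (hq : q ∈ SS) (hq' : q' ∈ SS)
    (h1 : ∀ t ∈ SS, ∑ r ∈ t, a r - ∑ r ∈ t ∩ q, d r ≤ ∑ r ∈ p, a r - ∑ r ∈ p ∩ q, d r)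
    (h2 : ∀ t ∈ SS, ∑ r ∈ t, a r - ∑ r ∈ t ∩ p, d r ≤ ∑ r ∈ q', a r - ∑ r ∈ q' ∩ p, d r)
    {t : Finset ρ} (ht : t ∈ SS) :
    ∑ r ∈ t, a r - ∑ r ∈ t ∩ q', d r ≤ ∑ r ∈ p, a r - ∑ r ∈ p ∩ q', d r := by
  by_contra! hN
  have e1 := h1 t ht
  have e2 := h1 q' hq'
  have e3 := h2 t ht
  have u1 := ultra htr hd ht hq' hq
  have u2 := ultra htr hd ht hq' hp
  have u3 := ultra htr hd hp hq ht
  have u4 := ultra htr hd hp hq hq'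
  rw [Finset.inter_comm q' p] at *
  rw [Finset.inter_comm q' q] at *
  rw [Finset.inter_comm p t] at *
  rw [Finset.inter_comm q t] at *
  rcases u1 with u1 | u1 <;> rcases u2 with u2 | u2 <;> rcases u3 with u3 | u3 <;>
    rcases u4 with u4 | u4 <;> linarith

/-- The number of players other than `i` and `j` using `r`. -/
def restCong {ρ ι : Type} [DecidableEq ρ] [DecidableEq ι] [Fintype ι]
    (s : ι → Finset ρ) (i j : ι) (r : ρ) : ℕ :=
  (Finset.univ.filter (fun k => k ≠ i ∧ k ≠ j ∧ r ∈ s k)).card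

theorem cgCong_eq {ρ ι : Type} [DecidableEq ρ] [DecidableEq ι] [Fintype ι]
    {s u : ι → Finset ρ} {i j : ι} (hij : i ≠ j) (hu : ∀ k, k ≠ i → k ≠ j → u k = s k) (r : ρ) :
    cgCong u r = restCong s i j r + (if r ∈ u i then 1 else 0) + (if r ∈ u j then 1 else 0) := by
  have : ∀ k, (if r ∈ u k then 1 else 0) = (if k ≠ i ∧ k ≠ j ∧ r ∈ s k then 1 else 0)
      + (if k = i then (if r ∈ u i then 1 else 0) else 0)
      + (if k = j then (if r ∈ u j then 1 else 0) else 0) := by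
    intro k
    by_cases hi : k = i
    · subst hi; simp [hij]
    · by_cases hj : k = j
      · subst hj; simp [hi]
      · simp [hi, hj, hu k hi hj]
  rw [cgCong, restCong, Finset.card_filter, Finset.card_filter, Finset.sum_congr rfl
    (fun k _ => this k), Finset.sum_add_distrib, Finset.sum_add_distrib]
  simp

theorem restCong_comm {ρ ι : Type} [DecidableEq ρ] [DecidableEq ι] [Fintype ι]
    (s : ι → Finset ρ) (i j : ι) : restCong s i j = restCong s j i := by
  funext r
  unfold restCong
  congr 1
  ext k
  simp only [Finset.mem_filter]
  tauto

theorem restCong_add_two_le {ρ ι : Type} [DecidableEq ρ] [DecidableEq ι] [Fintype ι]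
    (s : ι → Finset ρ) {i j : ι} (hij : i ≠ j) (r : ρ) :
    restCong s i j r + 2 ≤ Fintype.card ι := by
  -- Let both `i` and `j` use `r`; the congestion is still at most the number of players.
  have h := cgCong_eq (s := s)
    (u := Function.update (Function.update s i {r}) j {r}) hij
    (by intro k hi hj; simp [hi, hj]) r
  simp only [Function.update_self, Function.update_of_ne hij, Finset.mem_singleton, if_true] at h
  have h2 : cgCong (Function.update (Function.update s i {r}) j {r}) r ≤ Fintype.card ι :=
    Finset.card_le_univ _
  omega

/-- In a profile agreeing with `s` off `i` and `j`, the utility of `i` is the value of her strategy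
when `j` is ignored, minus the loss on the resources shared with `j`. -/
theorem cgUtil_eq {ρ ι : Type} [DecidableEq ρ] [DecidableEq ι] [Fintype ι] (P : ρ → ℕ → ℝ)
    {s u : ι → Finset ρ} {i j : ι} (hij : i ≠ j) (hu : ∀ k, k ≠ i → k ≠ j → u k = s k) :
    cgUtil P u i = ∑ r ∈ u i, P r (restCong s i j r + 1)
      - ∑ r ∈ u i ∩ u j, (P r (restCong s i j r + 1) - P r (restCong s i j r + 2)) := by
  rw [cgUtil, ← Finset.filter_mem_eq_inter, Finset.sum_filter, ← Finset.sum_sub_distrib]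
  refine Finset.sum_congr rfl fun r hr => ?_
  rw [cgCong_eq hij hu r]
  by_cases h : r ∈ u j <;> simp [hr, h]

/-- A player who is best responding still does so after a best-response step of another player. -/
theorem IsBR.step {ρ ι : Type} [DecidableEq ρ] [DecidableEq ι] [Fintype ι]
    {SS : Finset (Finset ρ)} {P : ρ → ℕ → ℝ} (htr : ¬ BadConfig SS)
    (hmono : MonotonePay (Fintype.card ι) P) {s s' : ι → Finset ρ} {i j : ι} (hij : i ≠ j)
    (hs : IsProfile SS s) (hi : IsBR SS P s i) (hj' : s' j ∈ SS)
    (hs' : ∀ k, k ≠ j → s' k = s k)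
    (hbr : ∀ t ∈ SS, cgUtil P (Function.update s j t) j ≤ cgUtil P s' j) :
    IsBR SS P s' i := by
  have hd : ∀ r, 0 ≤ P r (restCong s i j r + 1) - P r (restCong s i j r + 2) := fun r =>
    sub_nonneg.2 (hmono r _ _ (by omega) (by omega) (restCong_add_two_le s hij r)).le
  intro t ht
  have key := two_player htr (a := fun r => P r (restCong s i j r + 1)) hd
    (hs i) (hs j) hj' ?_ ?_ ht
  · rw [cgUtil_eq P (s := s) hij (u := Function.update s' i t)
        (by intro k h1 h2; simp [h1, hs' k h2]),
      cgUtil_eq P (s := s) hij (u := s') (by intro k _ h2; exact hs' k h2)]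
    simpa [hij.symm, hs' i hij] using key
  · intro t ht
    have := hi t ht
    rw [cgUtil_eq P (s := s) hij (u := Function.update s i t)
        (by intro k h1 h2; simp [h1]),
      cgUtil_eq P (s := s) hij (u := s) (by intros; rfl)] at this
    simpa [hij.symm] using this
  · intro t ht
    have := hbr t ht
    rw [cgUtil_eq P (s := s) hij.symm (u := Function.update s j t)
        (by intro k h1 h2; simp [h1]),
      cgUtil_eq P (s := s) hij.symm (u := s') (by intro k h1 _; exact hs' k h1),
      restCong_comm s j i] at this
    simpa [hij, hs' i hij] using this

theorem update_update_of_agree {ρ ι : Type} [DecidableEq ι]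
    {s s' : ι → Finset ρ} {j : ι} (hs' : ∀ k, k ≠ j → s' k = s k) (t : Finset ρ) :
    Function.update s' j t = Function.update s j t := by
  funext k
  by_cases h : k = j
  · subst h; simp
  · simp [h, hs' k h]

/-- In a monotone symmetric congestion game with `n` players whose subset-free
form has no bad configuration, any sequence of strictly improving best-response
steps has length at most `n`; in particular, a maximal such sequence ends in a
pure Nash equilibrium. -/
theorem best_response_sequence_reaches_NE {ρ ι : Type} [DecidableEq ρ] [Fintype ρ]
    [DecidableEq ι] [Fintype ι] [Nonempty ι]
    (SS : Finset (Finset ρ)) (P : ρ → ℕ → ℝ)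
    (hform : ValidForm SS) (hsf : SubsetFree SS) (htr : ¬ BadConfig SS)
    (hmono : MonotonePay (Fintype.card ι) P)
    (seq : ℕ → ι → Finset ρ) (h0 : IsProfile SS (seq 0))
    (m : ℕ) (hstep : ∀ k < m, BRStep SS P (seq k) (seq (k + 1))) :
    m ≤ Fintype.card ι ∧
      ((∀ s' : ι → Finset ρ, ¬ BRStep SS P (seq m) s') → IsNE SS P (seq m)) := by
  -- After `k` steps, at least `k` players (those who have moved) are best responding.
  have inv : ∀ k ≤ m, IsProfile SS (seq k) ∧
      ∃ M : Finset ι, M.card = k ∧ ∀ i ∈ M, IsBR SS P (seq k) i := by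
    intro k
    induction k with
    | zero => exact fun _ => ⟨h0, ∅, rfl, by simp⟩
    | succ k ih =>
      intro hk
      obtain ⟨hprof, M, hM, hBR⟩ := ih (by omega)
      obtain ⟨j, hj, hoff, hbest, himp⟩ := hstep k hk
      have hjM : j ∉ M := fun h => by
        have := hBR j h _ hj
        rw [← update_update_of_agree hoff, Function.update_eq_self] at this
        linarith
      refine ⟨fun i => ?_, insert j M, by rw [Finset.card_insert_of_notMem hjM, hM], ?_⟩
      · by_cases h : i = j
        · exact h ▸ hj
        · exact hoff i h ▸ hprof i
      · intro i hi
        rcases Finset.mem_insert.1 hi with rfl | hi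
        · intro t ht
          rw [update_update_of_agree hoff]
          exact hbest t ht
        · exact (hBR i hi).step htr hmono (ne_of_mem_of_not_mem hi hjM) hprof hj hoff hbest
  obtain ⟨hprof, M, hM, -⟩ := inv m le_rfl
  refine ⟨hM ▸ Finset.card_le_univ M, fun hmax => ⟨hprof, fun i t ht => ?_⟩⟩
  by_contra! hlt
  obtain ⟨b, hb, hbmax⟩ := SS.exists_max_image
    (fun t => cgUtil P (Function.update (seq m) i t) i) hform.1
  exact hmax (Function.update (seq m) i b) ⟨i, by simpa using hb,
    fun j hj => Function.update_of_ne hj _ _, fun t ht => hbmax t ht, hlt.trans_le (hbmax t ht)⟩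
end

section
/- Every symmetric congestion game (with arbitrary payoff functions P_r, not necessarily monotone) possesses at least one pure Nash equilibrium. -/
/-!
Rosenthal's potential argument. For a profile `s`, let
`Φ(s) = ∑ r, (P r 1 + ⋯ + P r c(s)_r)`. If player `i` switches to a strategy `t`, then
`Φ` splits into the potential of the other players' congestions, which does not depend on `t`,
plus exactly the utility that `i` obtains from `t` (`cgPotential_update`). Hence a profile that
maximizes `Φ` over the finite nonempty set of all profiles admits no profitable deviation.
-/

open Finset

/-- Rosenthal's potential `∑ r, ∑_{k=1}^{c(s)_r} P r k`; the inner sum is shifted to start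
at `0`. -/
noncomputable def cgPotential {ρ ι : Type} [DecidableEq ρ] [Fintype ρ] [Fintype ι]
    (P : ρ → ℕ → ℝ) (s : ι → Finset ρ) : ℝ :=
  ∑ r, ∑ k ∈ Finset.range (cgCong s r), P r (k + 1)

/-- Congestion of resource `r` caused by the players other than `i`. -/
def othersCong {ρ ι : Type} [DecidableEq ρ] [DecidableEq ι] [Fintype ι]
    (s : ι → Finset ρ) (i : ι) (r : ρ) : ℕ :=
  (Finset.univ.filter (fun j => j ≠ i ∧ r ∈ s j)).card

lemma cgCong_update {ρ ι : Type} [DecidableEq ρ] [DecidableEq ι] [Fintype ι]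
    (s : ι → Finset ρ) (i : ι) (t : Finset ρ) (r : ρ) :
    cgCong (Function.update s i t) r = othersCong s i r + if r ∈ t then 1 else 0 := by
  unfold cgCong othersCong
  split_ifs with hr
  · rw [← Finset.card_insert_of_notMem (a := i) (by simp)]
    congr 1
    ext j
    by_cases hj : j = i
    · subst hj; simp [hr]
    · simp [hj]
  · rw [add_zero]
    congr 1
    ext j
    by_cases hj : j = i
    · subst hj; simp [hr]
    · simp [hj]

/-- The potential after `i` plays `t` is a quantity independent of `t` plus the utility of `i`. -/
lemma cgPotential_update {ρ ι : Type} [DecidableEq ρ] [Fintype ρ] [DecidableEq ι] [Fintype ι]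
    (P : ρ → ℕ → ℝ) (s : ι → Finset ρ) (i : ι) (t : Finset ρ) :
    cgPotential P (Function.update s i t) =
      (∑ r, ∑ k ∈ Finset.range (othersCong s i r), P r (k + 1)) +
        cgUtil P (Function.update s i t) i := by
  have hU : cgUtil P (Function.update s i t) i =
      ∑ r, if r ∈ t then P r (othersCong s i r + 1) else 0 := by
    unfold cgUtil
    rw [Function.update_self, Finset.sum_ite_mem, Finset.univ_inter]
    refine Finset.sum_congr rfl fun r hr => ?_
    rw [cgCong_update, if_pos hr]
  rw [hU, ← Finset.sum_add_distrib]
  refine Finset.sum_congr rfl fun r _ => ?_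
  rw [cgCong_update]
  split_ifs
  · rw [Finset.sum_range_succ]
  · simp

/-- Rosenthal: every symmetric congestion game (with arbitrary resource payoff
functions) possesses a pure Nash equilibrium. -/
theorem exists_pure_NE {ρ ι : Type} [DecidableEq ρ] [Fintype ρ]
    [DecidableEq ι] [Fintype ι] [Nonempty ι]
    (SS : Finset (Finset ρ)) (hform : ValidForm SS) (P : ρ → ℕ → ℝ) :
    ∃ s : ι → Finset ρ, IsNE SS P s := by
  obtain ⟨⟨t₀, ht₀⟩, -⟩ := hform
  obtain ⟨s, hs, hmax⟩ := Finset.exists_max_image (Fintype.piFinset fun _ : ι => SS)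
    (cgPotential P) ⟨fun _ => t₀, by simpa using ht₀⟩
  rw [Fintype.mem_piFinset] at hs
  refine ⟨s, hs, fun i t ht => ?_⟩
  have hle := hmax (Function.update s i t) <| Fintype.mem_piFinset.2 fun j => by
    by_cases hj : j = i
    · subst hj; simpa using ht
    · simpa [hj] using hs j
  have h1 := cgPotential_update P s i t
  -- Keeping `s` is the trivial deviation of `i` to `s i`.
  have h2 := cgPotential_update P s i (s i)
  rw [Function.update_eq_self] at h2
  linarith
end
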